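/- Let β > 0 and k ≥ 0. Then ∫₀^∞ r·K₀(βr)·J₀(kr) dr = 1/(k² + β²). -/

import Mathlib

open MeasureTheory Real

/-- The modified Bessel function of the second kind of order zero:
`K₀(r) = ∫₀^∞ exp(−r·cosh t) dt`. -/
noncomputable def K0 (r : ℝ) : ℝ := ∫ t in Set.Ioi (0 : ℝ), Real.exp (-r * Real.cosh t)

/-- The Bessel function of the first kind of order zero,
`J₀(x) = (1/(2π)) ∫_{−π}^{π} e^{i x cos θ} dθ` (which is real-valued). -/
noncomputable def J0 (x : ℝ) : ℝ :=
  (1 / (2 * π)) *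
    (∫ θ in Set.Ioc (-π) π, Complex.exp (Complex.I * ((x * Real.cos θ : ℝ) : ℂ))).re


lemma J0_eq (x : ℝ) : J0 x = (1 / (2 * π)) * ∫ θ in Set.Ioc (-π) π, Real.cos (x * Real.cos θ) := by
  unfold J0
  congr 1
  have h : IntegrableOn (fun θ : ℝ => Complex.exp (Complex.I * ((x * Real.cos θ : ℝ) : ℂ)))
      (Set.Ioc (-π) π) := by
    apply Continuous.integrableOn_Ioc
    fun_prop
  have h2 := integral_re (𝕜 := ℂ) h
  rw [show (∫ θ in Set.Ioc (-π) π, Complex.exp (Complex.I * ((x * Real.cos θ : ℝ) : ℂ))).re = _ from h2.symm]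
  congr 1
  ext θ
  rw [mul_comm]
  exact Complex.exp_ofReal_mul_I_re _

lemma J0_cont : Continuous J0 := by
  have : J0 = fun x => (1 / (2 * π)) * ∫ θ in (-π)..π, Real.cos (x * Real.cos θ) := by
    ext x
    rw [J0_eq, intervalIntegral.integral_of_le (by linarith [pi_pos])]
  rw [this]
  apply Continuous.mul continuous_const
  apply intervalIntegral.continuous_parametric_intervalIntegral_of_continuous'
  fun_prop

lemma J0_le (x : ℝ) : |J0 x| ≤ 1 := by
  rw [J0_eq, ← intervalIntegral.integral_of_le (by linarith [pi_pos])]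
  have h := intervalIntegral.norm_integral_le_of_norm_le_const (a := -π) (b := π) (C := 1)
    (f := fun θ => Real.cos (x * Real.cos θ)) (fun θ _ => Real.abs_cos_le_one _)
  have hp := pi_pos
  rw [abs_mul, abs_of_pos (by positivity)]
  rw [Real.norm_eq_abs, sub_neg_eq_add, abs_of_pos (by linarith : 0 < π + π)] at h
  calc _ ≤ 1 / (2 * π) * (1 * (π + π)) := by gcongr
    _ = 1 := by field_simp; ring

lemma rexp_integrable {a : ℝ} (ha : 0 < a) :
    IntegrableOn (fun r : ℝ => r * Real.exp (-a * r)) (Set.Ioi 0) := by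
  simpa using integrableOn_rpow_mul_exp_neg_mul_rpow (p := 1) (s := 1) (b := a) (by norm_num) one_pos ha

lemma rcos_integral {a : ℝ} (ha : 0 < a) (b : ℝ) :
    ∫ r in Set.Ioi (0:ℝ), r * Real.exp (-a * r) * Real.cos (b * r) =
      (a ^ 2 - b ^ 2) / (a ^ 2 + b ^ 2) ^ 2 := by
  have hD : a ^ 2 + b ^ 2 ≠ 0 := by positivity
  have h1 : Filter.Tendsto (fun r : ℝ => r * Real.exp (-a * r)) Filter.atTop (nhds 0) := by
    simpa using tendsto_rpow_mul_exp_neg_mul_atTop_nhds_zero 1 a ha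
  have h0 : Filter.Tendsto (fun r : ℝ => Real.exp (-a * r)) Filter.atTop (nhds 0) := by
    simpa using tendsto_rpow_mul_exp_neg_mul_atTop_nhds_zero 0 a ha
  have hc (f : ℝ → ℝ) (hf : Filter.Tendsto f Filter.atTop (nhds 0)) (g : ℝ → ℝ)
      (hg : ∀ x, |g x| ≤ 1) : Filter.Tendsto (fun r => f r * g r) Filter.atTop (nhds 0) := by
    apply squeeze_zero_norm _ (by simpa using hf.norm)
    intro r
    rw [norm_mul]
    exact mul_le_of_le_one_right (norm_nonneg _) (hg r)
  have hcos : ∀ x, |(fun r => Real.cos (b * r)) x| ≤ 1 := fun x => Real.abs_cos_le_one _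
  have hsin : ∀ x, |(fun r => Real.sin (b * r)) x| ≤ 1 := fun x => Real.abs_sin_le_one _
  have ht : Filter.Tendsto (fun r : ℝ => -(Real.exp (-a * r) *
      ((r * a / (a^2+b^2) + (a^2-b^2)/(a^2+b^2)^2) * Real.cos (b * r) -
       (r * b / (a^2+b^2) + 2*a*b/(a^2+b^2)^2) * Real.sin (b * r)))) Filter.atTop (nhds 0) := by
    have := (((hc _ h1 _ hcos).const_mul (-(a / (a^2+b^2)))).add
      ((hc _ h0 _ hcos).const_mul (-((a^2-b^2) / (a^2+b^2)^2)))).add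
      (((hc _ h1 _ hsin).const_mul (b / (a^2+b^2))).add
      ((hc _ h0 _ hsin).const_mul (2*a*b / (a^2+b^2)^2)))
    simp only [mul_zero, add_zero] at this
    refine this.congr ?_
    intro r
    ring
  rw [integral_Ioi_of_hasDerivAt_of_tendsto' (f := fun r : ℝ => -(Real.exp (-a * r) *
      ((r * a / (a^2+b^2) + (a^2-b^2)/(a^2+b^2)^2) * Real.cos (b * r) -
       (r * b / (a^2+b^2) + 2*a*b/(a^2+b^2)^2) * Real.sin (b * r)))) ?_ ?_ ht]
  · simp
  · intro r _
    have e1 : HasDerivAt (fun r : ℝ => Real.exp (-a * r)) (Real.exp (-a * r) * (-a * 1)) r :=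
      ((hasDerivAt_id r).const_mul (-a)).exp
    have e2 : HasDerivAt (fun r : ℝ => Real.cos (b * r)) (-Real.sin (b * r) * (b * 1)) r :=
      ((hasDerivAt_id r).const_mul b).cos
    have e3 : HasDerivAt (fun r : ℝ => Real.sin (b * r)) (Real.cos (b * r) * (b * 1)) r :=
      ((hasDerivAt_id r).const_mul b).sin
    have e4 : HasDerivAt (fun r : ℝ => r * a / (a^2+b^2) + (a^2-b^2)/(a^2+b^2)^2)
        (1 * a / (a^2+b^2)) r :=
      (((hasDerivAt_id r).mul_const a).div_const _).add_const _
    have e5 : HasDerivAt (fun r : ℝ => r * b / (a^2+b^2) + 2*a*b/(a^2+b^2)^2)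
        (1 * b / (a^2+b^2)) r :=
      (((hasDerivAt_id r).mul_const b).div_const _).add_const _
    refine ((e1.mul ((e4.mul e2).sub (e5.mul e3))).neg).congr_deriv ?_
    simp only [Pi.mul_apply, Pi.sub_apply]
    field_simp
    ring
  · refine (rexp_integrable ha).mono' (by fun_prop) ?_
    refine (ae_restrict_mem measurableSet_Ioi).mono ?_
    intro r hr
    have hr : 0 < r := hr
    rw [norm_mul, Real.norm_of_nonneg (by positivity : 0 ≤ r * Real.exp (-a * r))]
    exact mul_le_of_le_one_right (by positivity) (Real.abs_cos_le_one _)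

lemma rexp_integral {a : ℝ} (ha : 0 < a) :
    ∫ r in Set.Ioi (0:ℝ), r * Real.exp (-a * r) = 1 / a ^ 2 := by
  have := rcos_integral ha 0
  simp only [zero_mul, Real.cos_zero, mul_one] at this
  rw [this]
  field_simp
  ring

lemma theta_integral {a : ℝ} (ha : 0 < a) (k : ℝ) :
    ∫ θ in Set.Ioc (-π) π, (a ^ 2 - (k * Real.cos θ) ^ 2) / (a ^ 2 + (k * Real.cos θ) ^ 2) ^ 2 =
      2 * π * (a / √(a ^ 2 + k ^ 2) ^ 3) := by
  rw [← intervalIntegral.integral_of_le (by linarith [pi_pos])]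
  set S := √(a ^ 2 + k ^ 2) with hS
  have hSp : 0 < S := by positivity
  have hS2 : S ^ 2 = a ^ 2 + k ^ 2 := Real.sq_sqrt (by positivity)
  rw [intervalIntegral.integral_eq_sub_of_hasDerivAt (f := fun θ =>
    a / S ^ 3 * (θ - Real.arctan ((S - a) * (Real.sin θ * Real.cos θ) /
      (S * Real.cos θ ^ 2 + a * Real.sin θ ^ 2))) -
    k ^ 2 / S ^ 2 * (Real.sin θ * Real.cos θ / (a ^ 2 + (k * Real.cos θ) ^ 2)))]
  · simp; ring
  · intro θ _
    have hs := Real.hasDerivAt_sin θ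
    have hc := Real.hasDerivAt_cos θ
    have hsc := Real.sin_sq_add_cos_sq θ
    have hD1 : 0 < S * Real.cos θ ^ 2 + a * Real.sin θ ^ 2 := by
      by_cases h : Real.cos θ = 0
      · have : Real.sin θ ^ 2 = 1 := by rw [h] at hsc; linarith
        rw [this, h]; simpa using ha
      · positivity
    have hD2 : 0 < a ^ 2 + (k * Real.cos θ) ^ 2 := by positivity
    have d1 := (((hs.mul hc).const_mul (S - a)).div
      (((hc.pow 2).const_mul S).add ((hs.pow 2).const_mul a)) hD1.ne').arctan
    have d2 := (hs.mul hc).div (((hc.const_mul k).pow 2).const_add (a ^ 2)) hD2.ne'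
    refine (((((hasDerivAt_id θ).sub d1).const_mul (a / S ^ 3)).sub
      (d2.const_mul (k ^ 2 / S ^ 2)))).congr_deriv ?_
    simp only [Pi.mul_apply, Pi.add_apply, Pi.div_apply, Pi.pow_apply]
    set s := Real.sin θ
    set c := Real.cos θ
    have hN : (S * c ^ 2 + a * s ^ 2) ^ 2 + ((S - a) * (s * c)) ^ 2 = a ^ 2 + (k * c) ^ 2 := by
      linear_combination (S^2*c^2+a^2*s^2)*hsc + c^2*hS2 + a^2*hsc
    have gen (N D X : ℝ) (hD : 0 < D) : 1 / (1 + (N / D) ^ 2) * (X / D ^ 2) = X / (D ^ 2 + N ^ 2) := by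
      have : 0 < D ^ 2 + N ^ 2 := by positivity
      field_simp
    rw [gen _ _ _ hD1, hN]
    have hX : (S - a) * (c * c + s * -s) * (S * c ^ 2 + a * s ^ 2) -
        (S - a) * (s * c) * (S * (2 * c * -s) + a * (2 * s * c)) = a ^ 2 + (k * c) ^ 2 - a * S := by
      linear_combination (S-a)*(S*c^2-a*s^2)*hsc + c^2*hS2 + (a^2-a*S)*hsc
    norm_num
    have hX' : (S - a) * (c * c + -(s * s)) * (S * c ^ 2 + a * s ^ 2) -
        (S - a) * (s * c) * (-(S * (2 * c * s)) + a * (2 * s * c)) = a ^ 2 + (k * c) ^ 2 - a * S := by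
      linear_combination hX
    rw [hX']
    have hk2 : k ^ 2 = S ^ 2 - a ^ 2 := by linarith
    have hs2 : s ^ 2 = 1 - c ^ 2 := by linarith
    have hE : a ^ 2 + (k * c) ^ 2 ≠ 0 := hD2.ne'
    generalize hEE : a ^ 2 + (k * c) ^ 2 = E at *
    field_simp
    rw [← hEE]
    rw [hs2, show S ^ 3 = S * S ^ 2 by ring, hS2]
    ring
  · apply Continuous.intervalIntegrable
    apply Continuous.div (by fun_prop) (by fun_prop)
    intro θ
    positivity

lemma laplace {a : ℝ} (ha : 0 < a) (k : ℝ) :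
    ∫ r in Set.Ioi (0:ℝ), r * Real.exp (-a * r) * J0 (k * r) = a / √(a ^ 2 + k ^ 2) ^ 3 := by
  have hp := pi_pos
  have h1 : ∀ r : ℝ, r * Real.exp (-a * r) * J0 (k * r) = 1 / (2 * π) *
      ∫ θ in Set.Ioc (-π) π, r * Real.exp (-a * r) * Real.cos (k * Real.cos θ * r) := by
    intro r
    rw [J0_eq, integral_const_mul]
    simp only [mul_right_comm]
    ring
  simp_rw [h1]
  rw [integral_const_mul, integral_integral_swap]
  · simp_rw [rcos_integral ha, theta_integral ha]
    field_simp
  · have hi : Integrable (fun z : ℝ × ℝ => (z.1 * Real.exp (-a * z.1)) * (1:ℝ))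
      ((volume.restrict (Set.Ioi 0)).prod (volume.restrict (Set.Ioc (-π) π))) :=
      Integrable.mul_prod (g := fun _ => (1:ℝ)) (rexp_integrable ha) (integrable_const _)
    refine hi.mono (Continuous.aestronglyMeasurable (by fun_prop)) ?_
    refine Filter.Eventually.of_forall ?_
    rintro ⟨r, θ⟩
    simp only [Function.uncurry, norm_mul, mul_one, norm_one]
    exact mul_le_of_le_one_right (by positivity) (Real.abs_cos_le_one _)

lemma t_facts {β : ℝ} (hβ : 0 < β) (k : ℝ) :
    IntegrableOn (fun t => β * Real.cosh t / √((β * Real.cosh t) ^ 2 + k ^ 2) ^ 3) (Set.Ioi 0) ∧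
    ∫ t in Set.Ioi (0:ℝ), β * Real.cosh t / √((β * Real.cosh t) ^ 2 + k ^ 2) ^ 3 =
      1 / (k ^ 2 + β ^ 2) := by
  set g : ℝ → ℝ := fun t => β * Real.sinh t / √((β * Real.cosh t) ^ 2 + k ^ 2) / (k ^ 2 + β ^ 2) with hg
  have hpos : ∀ t, 0 < (β * Real.cosh t) ^ 2 + k ^ 2 := by
    intro t
    have := Real.cosh_pos t
    positivity
  have hd : ∀ t, HasDerivAt g (β * Real.cosh t / √((β * Real.cosh t) ^ 2 + k ^ 2) ^ 3) t := by
    intro t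
    have h1 := ((((Real.hasDerivAt_cosh t).const_mul β).pow 2).add_const (k ^ 2)).sqrt (hpos t).ne'
    have h2 := (((Real.hasDerivAt_sinh t).const_mul β).div h1 (Real.sqrt_pos.2 (hpos t)).ne').div_const
      (k ^ 2 + β ^ 2)
    refine h2.congr_deriv ?_
    simp only [Pi.pow_apply]
    have hS2 := Real.sq_sqrt (hpos t).le
    have hSp := Real.sqrt_pos.2 (hpos t)
    set S := √((β * Real.cosh t) ^ 2 + k ^ 2)
    have hch := Real.cosh_sq t
    have : k ^ 2 + β ^ 2 ≠ 0 := by positivity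
    field_simp
    push_cast
    rw [hS2, mul_pow, mul_pow, hch]
    ring_nf
  have hnn : ∀ t ∈ Set.Ioi (0:ℝ), 0 ≤ β * Real.cosh t / √((β * Real.cosh t) ^ 2 + k ^ 2) ^ 3 := by
    intro t _
    have := Real.cosh_pos t
    positivity
  have hsinh : Filter.Tendsto Real.sinh Filter.atTop Filter.atTop :=
    Filter.tendsto_atTop_mono' _ ((Filter.eventually_ge_atTop 0).mono
      fun x hx => Real.self_le_sinh_iff.2 hx) Filter.tendsto_id
  have ht : Filter.Tendsto g Filter.atTop (nhds (1 / (k ^ 2 + β ^ 2))) := by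
    apply Filter.Tendsto.div_const
    have h1 : Filter.Tendsto (fun t => √(1 + (k ^ 2 + β ^ 2) * ((β * Real.sinh t)⁻¹) ^ 2))
        Filter.atTop (nhds (√(1 + (k ^ 2 + β ^ 2) * 0 ^ 2))) :=
      ((((hsinh.const_mul_atTop hβ).inv_tendsto_atTop.pow 2).const_mul _).const_add _).sqrt
    have h2 := h1.inv₀ (by simp)
    simp only [ne_eq, OfNat.ofNat_ne_zero, not_false_eq_true, zero_pow, mul_zero, add_zero,
      Real.sqrt_one, inv_one] at h2
    refine h2.congr' ?_
    filter_upwards [Filter.eventually_gt_atTop 0] with t htp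
    have hsp : 0 < β * Real.sinh t := mul_pos hβ (Real.sinh_pos_iff.2 htp)
    have : (β * Real.cosh t) ^ 2 + k ^ 2 = (β * Real.sinh t) ^ 2 *
        (1 + (k ^ 2 + β ^ 2) * ((β * Real.sinh t)⁻¹) ^ 2) := by
      rw [mul_pow, Real.cosh_sq]
      field_simp
      ring
    rw [this, Real.sqrt_mul (by positivity), Real.sqrt_sq hsp.le]
    field_simp
  have hc : ContinuousWithinAt g (Set.Ici 0) 0 := (hd 0).continuousAt.continuousWithinAt
  refine ⟨integrableOn_Ioi_deriv_of_nonneg hc (fun t _ => hd t) hnn ht, ?_⟩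
  rw [integral_Ioi_of_hasDerivAt_of_nonneg hc (fun t _ => hd t) hnn ht]
  simp [hg]

/-- `∫₀^∞ r K₀(βr) J₀(kr) dr = 1/(k² + β²)` for `β > 0`, `k ≥ 0`. -/
theorem integral_K0_J0 (β k : ℝ) (hβ : 0 < β) (hk : 0 ≤ k) :
    (∫ r in Set.Ioi (0 : ℝ), r * K0 (β * r) * J0 (k * r)) = 1 / (k ^ 2 + β ^ 2) := by
  have h1 : ∀ r : ℝ, r * K0 (β * r) * J0 (k * r) =
      ∫ t in Set.Ioi (0 : ℝ), r * Real.exp (-(β * Real.cosh t) * r) * J0 (k * r) := by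
    intro r
    rw [K0, integral_mul_const, integral_const_mul]
    congr 3
    ext t
    congr 1
    ring
  have hpos : ∀ t, 0 < β * Real.cosh t := fun t => mul_pos hβ (Real.cosh_pos t)
  simp_rw [h1]
  rw [integral_integral_swap]
  · simp_rw [fun t => laplace (hpos t) k]
    exact (t_facts hβ k).2
  · have hJ := J0_cont
    have hi : Integrable (fun z : ℝ × ℝ => z.1 * Real.exp (-(β * Real.cosh z.2) * z.1))
        ((volume.restrict (Set.Ioi 0)).prod (volume.restrict (Set.Ioi 0))) := by
      rw [integrable_prod_iff' (Continuous.aestronglyMeasurable (by fun_prop))]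
      refine ⟨Filter.Eventually.of_forall fun t => rexp_integrable (hpos t), ?_⟩
      refine (t_facts hβ 0).1.congr (Filter.Eventually.of_forall fun t => ?_)
      have hh := hpos t
      have : ∫ r in Set.Ioi (0:ℝ), ‖r * Real.exp (-(β * Real.cosh t) * r)‖ =
          ∫ r in Set.Ioi (0:ℝ), r * Real.exp (-(β * Real.cosh t) * r) := by
        refine setIntegral_congr_fun measurableSet_Ioi fun r hr => ?_
        have hr : 0 < r := hr
        exact Real.norm_of_nonneg (by positivity)
      dsimp only
      rw [this, rexp_integral hh]
      simp only [ne_eq, OfNat.ofNat_ne_zero, not_false_eq_true, zero_pow, add_zero]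
      rw [Real.sqrt_sq hh.le]
      field_simp
    refine hi.mono (Continuous.aestronglyMeasurable (by fun_prop)) ?_
    refine Filter.Eventually.of_forall ?_
    rintro ⟨r, t⟩
    simp only [Function.uncurry, norm_mul]
    exact mul_le_of_le_one_right (by positivity) (J0_le _)
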